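/- Define δ^reject_Δt(q,G,u) = 1_{u > R_Δt(q, q − Δt∇V(q) + √(2Δt)G)} · (√(2Δt) G − Δt ∇V(q)). Then there exists K > 0 such that |δ^reject_Δt(q,G,u)| ≤ K(1 + √Δt |G|) for all 0 < Δt ≤ 1, q, G ∈ ℝⁿ and u ∈ [0,1]; and for every p > 0 there exist C_p ≥ 0 and Δt* > 0 such that for all 0 < Δt ≤ Δt* and all q ∈ ℝⁿ, E_{G,U}|δ^reject_Δt(q,G,U)|^p ≤ C_p Δt^{(p+3)/2}. -/

import Mathlib

/-!
Write `h = q' - q` for the proposed increment and `M` for a common bound on the first three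
derivatives of `V`, which exists because `V` is smooth and periodic
(`exists_bound_of_periodic`). After cancellation, the logarithm of the Metropolis ratio is
`-(V q' - V q) + ⟪h, ∇V q + ∇V q'⟫ / 2 + dt / 4 * (‖∇V q‖² - ‖∇V q'‖²)`.
The first two terms form the error of the trapezoidal rule along the segment from `q` to `q'`,
which is `O(‖h‖³)` (`trapezoid_bound`), and the last one is `O(dt * ‖h‖)`. As
`‖h‖ ≤ (2 + M) √dt (1 + ‖g‖)`, the rejection probability is `O(dt^{3/2} (1 + ‖g‖)³)`
(`one_sub_Rk_le`). The integral over `u` equals this probability times `‖h‖ ^ p`, so the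
moment bound follows by integrating a polynomial in `‖g‖` against the Gaussian measure.
-/

open MeasureTheory RealInnerProductSpace

noncomputable section

abbrev En (n : ℕ) := EuclideanSpace ℝ (Fin n)

/-- Gaussian proposal density of the Euler–Maruyama scheme. -/
def Tker {n : ℕ} (V : En n → ℝ) (dt : ℝ) (q q' : En n) : ℝ :=
  (4 * Real.pi * dt) ^ (-(n : ℝ) / 2) *
    Real.exp (-‖q' - q + dt • gradient V q‖ ^ 2 / (4 * dt))

/-- Metropolis acceptance probability. -/
def Rk {n : ℕ} (V : En n → ℝ) (dt : ℝ) (q q' : En n) : ℝ :=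
  min 1 (Real.exp (-V q') * Tker V dt q' q / (Real.exp (-V q) * Tker V dt q q'))

/-- proposal move -/
def propMove {n : ℕ} (V : En n → ℝ) (dt : ℝ) (q g : En n) : En n :=
  q - dt • gradient V q + Real.sqrt (2 * dt) • g

def xi {n : ℕ} (V : En n → ℝ) (q g : En n) : ℝ :=
  -(Real.sqrt 2 / 6) * iteratedFDeriv ℝ 3 V q (fun _ => g) +
    (Real.sqrt 2 / 2) * ⟪gradient V q, fderiv ℝ (gradient V) q g⟫

def xiPlus {n : ℕ} (V : En n → ℝ) (q g : En n) : ℝ := max (xi V q g) 0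

/-- standard Gaussian measure on ℝⁿ -/
def gauss (n : ℕ) : Measure (En n) :=
  volume.withDensity fun g =>
    ENNReal.ofReal ((2 * Real.pi) ^ (-(n : ℝ) / 2) * Real.exp (-‖g‖ ^ 2 / 2))

/-- fundamental domain of the torus -/
def Box (n : ℕ) (L : ℝ) : Set (En n) := {q | ∀ i, q i ∈ Set.Ico (0 : ℝ) L}

/-- integral with respect to the Gibbs measure μ on the torus M -/
def muInt {n : ℕ} (V : En n → ℝ) (L : ℝ) (f : En n → ℝ) : ℝ :=
  (∫ q in Box n L, Real.exp (-V q))⁻¹ * ∫ q in Box n L, f q * Real.exp (-V q)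

/-- Laplacian -/
def lap {n : ℕ} (ψ : En n → ℝ) (q : En n) : ℝ :=
  ∑ i, iteratedFDeriv ℝ 2 ψ q (fun _ => EuclideanSpace.single i (1 : ℝ))

/-- generator of the overdamped Langevin dynamics -/
def gen {n : ℕ} (V ψ : En n → ℝ) (q : En n) : ℝ :=
  -⟪gradient V q, gradient ψ q⟫ + lap ψ q

/-- MALA transition operator on periodic functions -/
def Pmala {n : ℕ} (V : En n → ℝ) (dt : ℝ) (f : En n → ℝ) (q : En n) : ℝ :=
  f q + ∫ q', Rk V dt q q' * Tker V dt q q' * (f q' - f q)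

/-- the operator D₁ -/
def D1op {n : ℕ} (V ψ : En n → ℝ) (q : En n) : ℝ :=
  2 * ∑ i, ∑ j, (iteratedFDeriv ℝ 2 V q ![EuclideanSpace.single i (1:ℝ), EuclideanSpace.single j (1:ℝ)]) *
      (iteratedFDeriv ℝ 2 ψ q ![EuclideanSpace.single i (1:ℝ), EuclideanSpace.single j (1:ℝ)])
    + ⟪gradient (fun x => lap V x) q, gradient ψ q⟫
    - ⟪gradient V q, fderiv ℝ (gradient V) q (gradient ψ q)⟫

/-- the operator D₂ -/
def D2op {n : ℕ} (V ψ : En n → ℝ) (q : En n) : ℝ :=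
  -Real.sqrt 2 * ⟪∫ g, xiPlus V q g • g ∂(gauss n), gradient ψ q⟫

/-- the operator A appearing in the expansion of the MALA evolution operator -/
def Aop {n : ℕ} (V ψ : En n → ℝ) (q : En n) : ℝ :=
  (gen V (gen V ψ) q + D1op V ψ q + D2op V ψ q) / 2

/-- Metropolized increment -/
def deltaInc {n : ℕ} (V : En n → ℝ) (dt : ℝ) (q g : En n) (u : ℝ) : En n :=
  if u ≤ Rk V dt q (propMove V dt q g) then (-dt) • gradient V q + Real.sqrt (2 * dt) • g
  else 0

/-- expectation over G (std Gaussian) and U (uniform on [0,1]) of the increment -/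
def EguDelta {n : ℕ} (V : En n → ℝ) (dt : ℝ) (q : En n) : En n :=
  ∫ g, (∫ u in Set.Icc (0 : ℝ) 1, deltaInc V dt q g u) ∂(gauss n)


def deltaRej {n : ℕ} (V : En n → ℝ) (dt : ℝ) (q g : En n) (u : ℝ) : En n :=
  if Rk V dt q (propMove V dt q g) < u then Real.sqrt (2 * dt) • g - dt • gradient V q
  else 0

-- Needed for the norm on threefold iterated spaces of continuous linear maps.
set_option maxSynthPendingDepth 5

/-! ### Bounds on periodic functions -/

/-- Every point is congruent modulo the lattice `L ℤⁿ` to a point of a fixed compact ball, so a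
continuous periodic function is bounded. -/
lemma exists_bound_of_periodic {n : ℕ} {L : ℝ} (hL : 0 < L) {X : Type*}
    [NormedAddCommGroup X] (F : En n → X) (hF : Continuous F)
    (hper : ∀ (q : En n) (i : Fin n), F (q + L • EuclideanSpace.single i (1 : ℝ)) = F q) :
    ∃ M, ∀ x, ‖F x‖ ≤ M := by
  have hz : ∀ (i : Fin n) (k : ℤ) (q : En n),
      F (q + (k : ℝ) • L • EuclideanSpace.single i (1 : ℝ)) = F q := by
    intro i k q
    have h : Function.Periodic F (L • EuclideanSpace.single i (1 : ℝ)) := fun q => hper q i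
    have := h.zsmul k q
    rwa [← Int.cast_smul_eq_zsmul ℝ] at this
  have hs : ∀ (s : Finset (Fin n)) (k : Fin n → ℤ) (q : En n),
      F (q + ∑ i ∈ s, (k i : ℝ) • L • EuclideanSpace.single i (1 : ℝ)) = F q := by
    intro s k
    induction s using Finset.induction_on with
    | empty => simp
    | insert a s ha ih =>
      intro q
      rw [Finset.sum_insert ha, ← add_assoc, ih, hz]
  obtain ⟨M, hM⟩ := (isCompact_closedBall (0 : En n) (∑ _i : Fin n, L)).exists_bound_of_continuousOn
    hF.continuousOn
  refine ⟨M, fun x => ?_⟩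
  rw [← hs Finset.univ (fun i => -⌊x i / L⌋) x]
  apply hM
  rw [mem_closedBall_zero_iff]
  have hx : x = ∑ i, x i • EuclideanSpace.single i (1 : ℝ) := by
    ext j
    simp [Finset.sum_apply, Pi.single_apply]
  have hsum : x + ∑ i, ((-⌊x i / L⌋ : ℤ) : ℝ) • L • EuclideanSpace.single i (1 : ℝ)
      = ∑ i, (x i - ⌊x i / L⌋ * L) • EuclideanSpace.single i (1 : ℝ) := by
    conv_lhs => rw [hx]
    rw [← Finset.sum_add_distrib]
    refine Finset.sum_congr rfl fun i _ => ?_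
    rw [← hx, smul_smul, ← add_smul]
    push_cast
    ring_nf
  rw [hsum]
  refine (norm_sum_le _ _).trans (Finset.sum_le_sum fun i _ => ?_)
  rw [norm_smul]
  simp only [PiLp.norm_single, norm_one, mul_one, Real.norm_eq_abs]
  have h1 := Int.floor_le (x i / L)
  have h2 := Int.lt_floor_add_one (x i / L)
  rw [le_div_iff₀ hL] at h1
  rw [div_lt_iff₀ hL] at h2
  rw [abs_le]
  constructor <;> linarith

lemma periodic_fderiv {n : ℕ} {X : Type*} [NormedAddCommGroup X] [NormedSpace ℝ X]
    {F : En n → X} {a : En n} (h : ∀ q, F (q + a) = F q) (q : En n) :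
    fderiv ℝ F (q + a) = fderiv ℝ F q := by
  rw [← fderiv_comp_add_right]
  simp only [h]

/-- The first three derivatives of a smooth periodic function admit a common bound. -/
lemma exists_deriv_bound {n : ℕ} {L : ℝ} (hL : 0 < L) {V : En n → ℝ}
    (hV : ContDiff ℝ (⊤ : ℕ∞) V)
    (hper : ∀ (q : En n) (i : Fin n), V (q + L • EuclideanSpace.single i (1 : ℝ)) = V q) :
    ∃ M, 0 ≤ M ∧ (∀ x, ‖fderiv ℝ V x‖ ≤ M) ∧ (∀ x, ‖fderiv ℝ (fderiv ℝ V) x‖ ≤ M) ∧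
      ∀ x, ‖fderiv ℝ (fderiv ℝ (fderiv ℝ V)) x‖ ≤ M := by
  have c1 : ContDiff ℝ (⊤ : ℕ∞) (fderiv ℝ V) := hV.fderiv_right (by simp)
  have c2 : ContDiff ℝ (⊤ : ℕ∞) (fderiv ℝ (fderiv ℝ V)) := c1.fderiv_right (by simp)
  have c3 : ContDiff ℝ (⊤ : ℕ∞) (fderiv ℝ (fderiv ℝ (fderiv ℝ V))) := c2.fderiv_right (by simp)
  have p1 := fun q i => periodic_fderiv (fun q => hper q i) q
  have p2 := fun q i => periodic_fderiv (fun q => p1 q i) q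
  have p3 := fun q i => periodic_fderiv (fun q => p2 q i) q
  obtain ⟨M1, h1⟩ := exists_bound_of_periodic hL _ c1.continuous p1
  obtain ⟨M2, h2⟩ := exists_bound_of_periodic hL _ c2.continuous p2
  obtain ⟨M3, h3⟩ := exists_bound_of_periodic hL _ c3.continuous p3
  refine ⟨max M1 (max M2 M3), ((norm_nonneg _).trans (h1 0)).trans (le_max_left _ _),
    fun x => (h1 x).trans (le_max_left _ _), fun x => (h2 x).trans ?_, fun x => (h3 x).trans ?_⟩
  · simp
  · simp

/-! ### The logarithm of the Metropolis ratio -/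

/-- Error of the trapezoidal rule on a segment. With `f t = V (q + t h)`, the function
`φ t = f t - t / 2 * (f' 0 + f' t)` satisfies `φ' 0 = 0` and `φ'' t = - t / 2 * f''' t`; two
applications of the mean value inequality bound `φ 1 - φ 0`. -/
lemma trapezoid_bound {n : ℕ} {V : En n → ℝ} (hV : ContDiff ℝ (⊤ : ℕ∞) V) {M : ℝ}
    (h3 : ∀ x, ‖fderiv ℝ (fderiv ℝ (fderiv ℝ V)) x‖ ≤ M) (q h : En n) :
    |V (q + h) - V q - (fderiv ℝ V q h + fderiv ℝ V (q + h) h) / 2| ≤ M / 2 * ‖h‖ ^ 3 := by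
  have c1 : ContDiff ℝ (⊤ : ℕ∞) (fderiv ℝ V) := hV.fderiv_right (by simp)
  have c2 : ContDiff ℝ (⊤ : ℕ∞) (fderiv ℝ (fderiv ℝ V)) := c1.fderiv_right (by simp)
  have hl : ∀ t : ℝ, HasDerivAt (fun t : ℝ => q + t • h) h t := fun t => by
    simpa using ((hasDerivAt_id t).smul_const h).const_add q
  have d0 : ∀ t : ℝ, HasDerivAt (fun t : ℝ => V (q + t • h)) (fderiv ℝ V (q + t • h) h) t :=
    fun t => ((hV.differentiable (by simp)) _).hasFDerivAt.comp_hasDerivAt t (hl t)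
  have d1 : ∀ t : ℝ, HasDerivAt (fun t : ℝ => fderiv ℝ V (q + t • h) h)
      (fderiv ℝ (fderiv ℝ V) (q + t • h) h h) t := fun t => by
    simpa using (((c1.differentiable (by simp)) _).hasFDerivAt.comp_hasDerivAt t (hl t)).clm_apply
      (hasDerivAt_const t h)
  have d2 : ∀ t : ℝ, HasDerivAt (fun t : ℝ => fderiv ℝ (fderiv ℝ V) (q + t • h) h h)
      (fderiv ℝ (fderiv ℝ (fderiv ℝ V)) (q + t • h) h h h) t := fun t => by
    simpa using ((((c2.differentiable (by simp)) _).hasFDerivAt.comp_hasDerivAt t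
      (hl t)).clm_apply (hasDerivAt_const t h)).clm_apply (hasDerivAt_const t h)
  set φ : ℝ → ℝ := fun t => V (q + t • h) - t / 2 * (fderiv ℝ V q h + fderiv ℝ V (q + t • h) h)
    with hφ
  set φ' : ℝ → ℝ := fun t => (fderiv ℝ V (q + t • h) h - fderiv ℝ V q h) / 2
    - t / 2 * fderiv ℝ (fderiv ℝ V) (q + t • h) h h with hφ'
  have e1 : ∀ t, HasDerivAt φ (φ' t) t := fun t => by
    have := (d0 t).sub (((hasDerivAt_id t).div_const 2).mul ((d1 t).const_add (fderiv ℝ V q h)))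
    convert! this using 1
    simp only [hφ', id]
    ring
  have e2 : ∀ t, HasDerivAt φ' (- (t / 2 * fderiv ℝ (fderiv ℝ (fderiv ℝ V)) (q + t • h) h h h)) t :=
    fun t => by
    have := (((d1 t).sub_const (fderiv ℝ V q h)).div_const 2).sub
      (((hasDerivAt_id t).div_const 2).mul (d2 t))
    convert! this using 1
    simp only [id]
    ring
  have b3 : ∀ x, ‖fderiv ℝ (fderiv ℝ (fderiv ℝ V)) x h h h‖ ≤ M * ‖h‖ ^ 3 := fun x => by
    calc _ ≤ ‖fderiv ℝ (fderiv ℝ (fderiv ℝ V)) x‖ * ‖h‖ * ‖h‖ * ‖h‖ := by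
          refine (ContinuousLinearMap.le_opNorm _ _).trans ?_
          gcongr
          refine (ContinuousLinearMap.le_opNorm _ _).trans ?_
          gcongr
          exact ContinuousLinearMap.le_opNorm _ _
      _ ≤ M * ‖h‖ * ‖h‖ * ‖h‖ := by gcongr; exact h3 x
      _ = _ := by ring
  have b2 : ∀ t ∈ Set.Icc (0 : ℝ) 1, ‖φ' t‖ ≤ M / 2 * ‖h‖ ^ 3 := by
    intro t ht
    have hM : 0 ≤ M * ‖h‖ ^ 3 := (norm_nonneg _).trans (b3 0)
    have key := norm_image_sub_le_of_norm_deriv_le_segment'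
      (f := φ') (a := 0) (b := 1) (C := M / 2 * ‖h‖ ^ 3)
      (fun x _ => (e2 x).hasDerivWithinAt) (fun x hx => by
        rw [norm_neg, norm_mul]
        have : ‖x / 2‖ ≤ 1 / 2 := by
          rw [Real.norm_eq_abs, abs_of_nonneg (by linarith [hx.1])]
          linarith [hx.2]
        calc _ ≤ 1 / 2 * (M * ‖h‖ ^ 3) := by gcongr; exact b3 _
          _ = _ := by ring) t ht
    have h0 : φ' 0 = 0 := by simp [hφ']
    rw [h0, sub_zero, sub_zero] at key
    refine key.trans ?_
    nlinarith [ht.2]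
  have key := norm_image_sub_le_of_norm_deriv_le_segment_01' (f := φ)
    (fun x _ => (e1 x).hasDerivWithinAt) (fun x hx => b2 x ⟨hx.1, hx.2.le⟩)
  convert key using 1
  rw [Real.norm_eq_abs]
  congr 1
  simp only [hφ, one_smul, zero_smul, add_zero]
  ring

lemma inner_grad {n : ℕ} (V : En n → ℝ) (q h : En n) :
    ⟪h, gradient V q⟫ = fderiv ℝ V q h := by
  rw [real_inner_comm, gradient, InnerProductSpace.toDual_symm_apply]

lemma norm_grad {n : ℕ} (V : En n → ℝ) (q : En n) : ‖gradient V q‖ = ‖fderiv ℝ V q‖ := by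
  rw [gradient, LinearIsometryEquiv.norm_map]

/-- The Metropolis ratio as a single exponential; the normalizing constants cancel. -/
lemma ratio_eq {n : ℕ} (V : En n → ℝ) {dt : ℝ} (hdt : 0 < dt) (q h : En n) :
    Real.exp (-V (q + h)) * Tker V dt (q + h) q / (Real.exp (-V q) * Tker V dt q (q + h)) =
      Real.exp (-(V (q + h) - V q - (fderiv ℝ V q h + fderiv ℝ V (q + h) h) / 2)
        + dt / 4 * (‖fderiv ℝ V q‖ ^ 2 - ‖fderiv ℝ V (q + h)‖ ^ 2)) := by
  have hc : (4 * Real.pi * dt) ^ (-(n : ℝ) / 2) ≠ 0 := by positivity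
  have e1 : q - (q + h) + dt • gradient V (q + h) = dt • gradient V (q + h) - h := by abel
  have e2 : q + h - q + dt • gradient V q = dt • gradient V q + h := by abel
  have n1 := norm_sub_sq_real (dt • gradient V (q + h)) h
  have n2 := norm_add_sq_real (dt • gradient V q) h
  rw [real_inner_comm, real_inner_smul_right, inner_grad, norm_smul, norm_grad, Real.norm_eq_abs,
    mul_pow, sq_abs] at n1 n2
  unfold Tker
  rw [e1, e2, n1, n2, mul_left_comm, mul_left_comm (Real.exp (-V q)), mul_div_mul_left _ _ hc,
    ← Real.exp_add, ← Real.exp_add, ← Real.exp_sub]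
  congr 1
  field_simp
  ring

/-! ### The rejection probability -/

lemma Rk_nonneg {n : ℕ} (V : En n → ℝ) {dt : ℝ} (hdt : 0 < dt) (q q' : En n) :
    0 ≤ Rk V dt q q' := by
  unfold Rk Tker
  positivity

lemma one_sub_min_exp_le (x : ℝ) : 1 - min 1 (Real.exp x) ≤ |x| := by
  rcases le_total 1 (Real.exp x) with h | h
  · simp [min_eq_left h]
  · rw [min_eq_right h]
    linarith [Real.add_one_le_exp x, neg_abs_le x]

lemma incr_bound {n : ℕ} {V : En n → ℝ} {M : ℝ} (h1 : ∀ x, ‖fderiv ℝ V x‖ ≤ M) {dt : ℝ}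
    (hdt : 0 < dt) (q g : En n) :
    ‖Real.sqrt (2 * dt) • g - dt • gradient V q‖ ≤ 2 * Real.sqrt dt * ‖g‖ + dt * M := by
  refine (norm_sub_le _ _).trans ?_
  rw [norm_smul, norm_smul, norm_grad, Real.norm_eq_abs, Real.norm_eq_abs, abs_of_pos hdt,
    abs_of_nonneg (Real.sqrt_nonneg _), Real.sqrt_mul (by norm_num)]
  have : Real.sqrt 2 ≤ 2 := by
    rw [Real.sqrt_le_left (by norm_num)]; norm_num
  gcongr
  exact h1 q

lemma incr_bound_sqrt {n : ℕ} {V : En n → ℝ} {M : ℝ} (hM : 0 ≤ M)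
    (h1 : ∀ x, ‖fderiv ℝ V x‖ ≤ M) {dt : ℝ} (hdt : 0 < dt) (hdt1 : dt ≤ 1) (q g : En n) :
    ‖Real.sqrt (2 * dt) • g - dt • gradient V q‖ ≤ (2 + M) * Real.sqrt dt * (1 + ‖g‖) := by
  refine (incr_bound h1 hdt q g).trans ?_
  have hs : Real.sqrt dt ^ 2 = dt := Real.sq_sqrt hdt.le
  have hs0 := Real.sqrt_nonneg dt
  have hs1 : Real.sqrt dt ≤ 1 := Real.sqrt_le_one.2 hdt1
  have hg := norm_nonneg g
  have : dt ≤ Real.sqrt dt := by nlinarith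
  nlinarith [mul_le_mul_of_nonneg_right this hM, mul_nonneg (mul_nonneg hs0 hM) hg]

lemma one_sub_Rk_le {n : ℕ} {V : En n → ℝ} (hV : ContDiff ℝ (⊤ : ℕ∞) V) {M : ℝ} (hM : 0 ≤ M)
    (h1 : ∀ x, ‖fderiv ℝ V x‖ ≤ M) (h2 : ∀ x, ‖fderiv ℝ (fderiv ℝ V) x‖ ≤ M)
    (h3 : ∀ x, ‖fderiv ℝ (fderiv ℝ (fderiv ℝ V)) x‖ ≤ M) {dt : ℝ}
    (hdt : 0 < dt) (hdt1 : dt ≤ 1) (q g : En n) :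
    1 - Rk V dt q (propMove V dt q g) ≤
      (M / 2 * (2 + M) ^ 3 + M ^ 2 / 2 * (2 + M)) * Real.sqrt dt ^ 3 * (1 + ‖g‖) ^ 3 := by
  have hp : propMove V dt q g = q + (Real.sqrt (2 * dt) • g - dt • gradient V q) := by
    unfold propMove; abel
  have hb := incr_bound_sqrt hM h1 hdt hdt1 q g
  rw [hp]
  generalize Real.sqrt (2 * dt) • g - dt • gradient V q = h at hb
  unfold Rk
  rw [ratio_eq V hdt]
  refine (one_sub_min_exp_le _).trans ((abs_add_le _ _).trans ?_)
  rw [abs_neg]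
  have ht := trapezoid_bound hV h3 q h
  have c1 : ContDiff ℝ (⊤ : ℕ∞) (fderiv ℝ V) := hV.fderiv_right (by simp)
  have hlip : ‖fderiv ℝ V q - fderiv ℝ V (q + h)‖ ≤ M * ‖h‖ := by
    have := (convex_univ (𝕜 := ℝ) (E := En n)).norm_image_sub_le_of_norm_fderiv_le (𝕜 := ℝ)
      (f := fderiv ℝ V) (fun x _ => (c1.differentiable (by simp)) x)
      (fun x _ => h2 x) (Set.mem_univ q) (Set.mem_univ (q + h))
    rw [norm_sub_rev]
    simpa using this
  have hd : |dt / 4 * (‖fderiv ℝ V q‖ ^ 2 - ‖fderiv ℝ V (q + h)‖ ^ 2)| ≤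
      dt * (M ^ 2 / 2) * ‖h‖ := by
    have a1 : |‖fderiv ℝ V q‖ - ‖fderiv ℝ V (q + h)‖| ≤ M * ‖h‖ :=
      (abs_norm_sub_norm_le _ _).trans hlip
    have a2 : |‖fderiv ℝ V q‖ + ‖fderiv ℝ V (q + h)‖| ≤ 2 * M := by
      rw [abs_of_nonneg (by positivity)]
      linarith [h1 q, h1 (q + h)]
    rw [sq_sub_sq, abs_mul, abs_mul, abs_of_pos (by positivity : 0 < dt / 4)]
    calc _ ≤ dt / 4 * (2 * M * (M * ‖h‖)) := by gcongr
      _ = _ := by ring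
  have hs : dt = Real.sqrt dt ^ 2 := (Real.sq_sqrt hdt.le).symm
  have hs0 := Real.sqrt_nonneg dt
  have hone : 1 + ‖g‖ ≤ (1 + ‖g‖) ^ 3 := le_self_pow₀ (by linarith [norm_nonneg g]) (by norm_num)
  calc _ ≤ M / 2 * ‖h‖ ^ 3 + dt * (M ^ 2 / 2) * ‖h‖ := add_le_add ht hd
    _ ≤ M / 2 * ((2 + M) * Real.sqrt dt * (1 + ‖g‖)) ^ 3
        + dt * (M ^ 2 / 2) * ((2 + M) * Real.sqrt dt * (1 + ‖g‖)) := by gcongr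
    _ = M / 2 * (2 + M) ^ 3 * Real.sqrt dt ^ 3 * (1 + ‖g‖) ^ 3
        + M ^ 2 / 2 * (2 + M) * Real.sqrt dt ^ 3 * (1 + ‖g‖) := by
      nth_rw 2 [hs]; ring
    _ ≤ M / 2 * (2 + M) ^ 3 * Real.sqrt dt ^ 3 * (1 + ‖g‖) ^ 3
        + M ^ 2 / 2 * (2 + M) * Real.sqrt dt ^ 3 * (1 + ‖g‖) ^ 3 := by gcongr
    _ = _ := by ring

/-- Integrating out the uniform variable leaves the rejection probability. -/
lemma integral_u {n : ℕ} (V : En n → ℝ) {dt p : ℝ} (hdt : 0 < dt) (hp : 0 < p) (q g : En n) :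
    ∫ u in Set.Icc (0 : ℝ) 1, ‖deltaRej V dt q g u‖ ^ p =
      (1 - Rk V dt q (propMove V dt q g)) *
        ‖Real.sqrt (2 * dt) • g - dt • gradient V q‖ ^ p := by
  have h0 := Rk_nonneg V hdt q (propMove V dt q g)
  have h1 : Rk V dt q (propMove V dt q g) ≤ 1 := min_le_left _ _
  unfold deltaRej
  generalize Rk V dt q (propMove V dt q g) = R at *
  generalize Real.sqrt (2 * dt) • g - dt • gradient V q = h
  have : (fun u : ℝ => ‖if R < u then h else 0‖ ^ p) =
      (Set.Ioi R).indicator (fun _ => ‖h‖ ^ p) := by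
    ext u
    by_cases hu : R < u <;> simp [hu, hp.ne']
  rw [this, setIntegral_indicator measurableSet_Ioi, setIntegral_const, smul_eq_mul]
  have hset : Set.Icc (0 : ℝ) 1 ∩ Set.Ioi R = Set.Ioc R 1 := by
    ext u
    simp only [Set.mem_inter_iff, Set.mem_Icc, Set.mem_Ioi, Set.mem_Ioc]
    constructor
    · rintro ⟨⟨_, h⟩, h'⟩; exact ⟨h', h⟩
    · rintro ⟨h, h'⟩; exact ⟨⟨by linarith, h'⟩, h⟩
  rw [hset, Real.volume_real_Ioc_of_le h1]

/-! ### Gaussian moments -/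

lemma integrable_pow_gauss (n m : ℕ) :
    Integrable (fun g : En n => (1 + ‖g‖) ^ m) (gauss n) := by
  unfold gauss
  rw [integrable_withDensity_iff_integrable_smul' (by fun_prop) (by simp)]
  have hG : Integrable (fun g : En n => Real.exp (-(1 / 4) * ‖g‖ ^ 2)) := by
    have := (GaussianFourier.integrable_cexp_neg_mul_sq_norm_add (V := En n) (b := 1 / 4)
      (by norm_num) 0 0).norm
    refine this.congr (Filter.Eventually.of_forall fun g => ?_)
    simp only [Complex.norm_exp]
    congr 1
    have : (-(1 / 4 : ℂ) * (‖g‖ : ℂ) ^ 2 + 0 * ((⟪(0 : En n), g⟫ : ℝ) : ℂ)) =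
      ((-(1 / 4) * ‖g‖ ^ 2 : ℝ) : ℂ) := by push_cast; ring
    rw [this, Complex.ofReal_re]
  set c : ℝ := (2 * Real.pi) ^ (-(n : ℝ) / 2) with hc
  have hc0 : 0 ≤ c := by positivity
  refine (hG.const_mul (c * (m.factorial * Real.exp 2))).mono' (by fun_prop)
    (Filter.Eventually.of_forall fun g => ?_)
  have hr := norm_nonneg g
  rw [ENNReal.toReal_ofReal (by positivity), smul_eq_mul, Real.norm_of_nonneg (by positivity)]
  have h := Real.pow_div_factorial_le_exp _ (by linarith : 0 ≤ 1 + ‖g‖) m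
  rw [div_le_iff₀ (by positivity)] at h
  -- `1 + r ≤ 2 + r ^ 2 / 4`, so half of the Gaussian exponent absorbs the polynomial.
  have hexp : Real.exp (-‖g‖ ^ 2 / 2) * Real.exp (1 + ‖g‖) ≤
      Real.exp 2 * Real.exp (-(1 / 4) * ‖g‖ ^ 2) := by
    rw [← Real.exp_add, ← Real.exp_add, Real.exp_le_exp]
    nlinarith [sq_nonneg (‖g‖ - 2)]
  calc c * Real.exp (-‖g‖ ^ 2 / 2) * (1 + ‖g‖) ^ m
      ≤ c * Real.exp (-‖g‖ ^ 2 / 2) * (Real.exp (1 + ‖g‖) * m.factorial) := by gcongr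
    _ = c * m.factorial * (Real.exp (-‖g‖ ^ 2 / 2) * Real.exp (1 + ‖g‖)) := by ring
    _ ≤ c * m.factorial * (Real.exp 2 * Real.exp (-(1 / 4) * ‖g‖ ^ 2)) := by gcongr
    _ = _ := by ring

theorem stmt13 (n : ℕ) (hn : 1 ≤ n) (L : ℝ) (hL : 0 < L)
    (V : En n → ℝ) (hV : ContDiff ℝ (⊤ : ℕ∞) V)
    (hper : ∀ (q : En n) (i : Fin n), V (q + L • EuclideanSpace.single i (1 : ℝ)) = V q) :
    (∃ K > (0 : ℝ), ∀ dt : ℝ, 0 < dt → dt ≤ 1 → ∀ (q g : En n), ∀ u ∈ Set.Icc (0 : ℝ) 1,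
        ‖deltaRej V dt q g u‖ ≤ K * (1 + Real.sqrt dt * ‖g‖)) ∧
      ∀ p : ℝ, 0 < p → ∃ C ≥ (0 : ℝ), ∃ dts > (0 : ℝ), ∀ dt : ℝ, 0 < dt → dt ≤ dts →
        ∀ q : En n,
          ∫ g, (∫ u in Set.Icc (0 : ℝ) 1, ‖deltaRej V dt q g u‖ ^ p) ∂(gauss n) ≤
            C * dt ^ ((p + 3) / 2) := by
  obtain ⟨M, hM, h1, h2, h3⟩ := exists_deriv_bound hL hV hper
  constructor
  · refine ⟨2 + M, by positivity, fun dt hdt hdt1 q g u _ => ?_⟩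
    have hs := Real.sqrt_nonneg dt
    have hg := norm_nonneg g
    unfold deltaRej
    split_ifs
    · refine (incr_bound h1 hdt q g).trans ?_
      nlinarith [mul_nonneg (mul_nonneg hs hM) hg]
    · rw [norm_zero]; positivity
  · intro p hp
    set m := 3 + ⌈p⌉₊ with hm
    set B := M / 2 * (2 + M) ^ 3 + M ^ 2 / 2 * (2 + M) with hB
    have hB0 : 0 ≤ B := by positivity
    refine ⟨B * (2 + M) ^ p * ∫ g : En n, (1 + ‖g‖) ^ m ∂(gauss n), ?_, 1, one_pos, ?_⟩
    · exact mul_nonneg (by positivity) (integral_nonneg fun g => by positivity)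
    intro dt hdt hdt1 q
    have hrw : dt ^ ((p + 3) / 2) = Real.sqrt dt ^ p * Real.sqrt dt ^ 3 := by
      rw [← Real.rpow_natCast, ← Real.rpow_add (Real.sqrt_pos.2 hdt), Real.sqrt_eq_rpow,
        ← Real.rpow_mul hdt.le]
      congr 1; push_cast; ring
    have hfin : B * (2 + M) ^ p * (∫ g : En n, (1 + ‖g‖) ^ m ∂(gauss n)) * dt ^ ((p + 3) / 2) =
        ∫ g : En n, B * (2 + M) ^ p * dt ^ ((p + 3) / 2) * (1 + ‖g‖) ^ m ∂(gauss n) := by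
      rw [integral_const_mul]; ring
    rw [hfin]
    refine integral_mono_of_nonneg (Filter.Eventually.of_forall fun g =>
      integral_nonneg fun u => by positivity)
      ((integrable_pow_gauss n m).const_mul _) (Filter.Eventually.of_forall fun g => ?_)
    simp only
    rw [integral_u V hdt hp]
    have hg1 : 1 ≤ 1 + ‖g‖ := by linarith [norm_nonneg g]
    have hpow : (1 + ‖g‖) ^ p ≤ (1 + ‖g‖) ^ ⌈p⌉₊ := by
      rw [← Real.rpow_natCast]
      exact Real.rpow_le_rpow_of_exponent_le hg1 (Nat.le_ceil p)
    calc _ ≤ (B * Real.sqrt dt ^ 3 * (1 + ‖g‖) ^ 3) *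
          ((2 + M) * Real.sqrt dt * (1 + ‖g‖)) ^ p := by
          gcongr
          · exact one_sub_Rk_le hV hM h1 h2 h3 hdt hdt1 q g
          · exact incr_bound_sqrt hM h1 hdt hdt1 q g
      _ = (B * Real.sqrt dt ^ 3 * (1 + ‖g‖) ^ 3) *
          ((2 + M) ^ p * Real.sqrt dt ^ p * (1 + ‖g‖) ^ p) := by
          rw [Real.mul_rpow (by positivity) (by positivity),
            Real.mul_rpow (by positivity) (by positivity)]
      _ ≤ (B * Real.sqrt dt ^ 3 * (1 + ‖g‖) ^ 3) *
          ((2 + M) ^ p * Real.sqrt dt ^ p * (1 + ‖g‖) ^ ⌈p⌉₊) := by gcongr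
      _ = _ := by rw [hrw, hm, pow_add]; ring
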